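/- Let d ≥ 1, T > 0 and k, l ∈ ℝ with l > k + 1. Then there is no constant C > 0 such that for all bounded measurable symmetric sets A, B ⊆ ℝ^d (i.e., A = −A and B = −B) one has sup_{t ∈ [0,T]} ‖ ∫₀ᵗ cos((t−s)|ξ|) · |ξ|² · ∫_{ℝ^d} (⟨ξ⟩^{l−1} / (⟨ξ₁⟩^k ⟨ξ−ξ₁⟩^k)) · cos(s(|ξ₁|² − |ξ−ξ₁|²)) · χ_A(ξ₁) χ_B(ξ−ξ₁) dξ₁ ds ‖_{L²_ξ(ℝ^d)} ≤ C · |A|^{1/2} |B|^{1/2}. (This is the quantitative content of the case l > k + 1 of the C² ill-posedness of the solution map of the Zakharov system at the origin of H^k × H^l × H^{l−1}.) -/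

import Mathlib

/-!
The failure comes from the non-resonant interaction of low and high frequencies. Let `a` be a vector
of large norm `N`, let `A` be the ball of radius `2` about the origin and `B` the union of the unit
balls about `a` and `-a`. On the support of the integrand `|ξ₁| < 2` and `|ξ - ξ₁| ~ N`, so all
phases are at most `4 N²` in absolute value, and for times `s ≤ t = 1 / (4 N²)` both cosines are at
least `1/2`: there is no cancellation. For `ξ` in the unit ball about `a` the set of admissible `ξ₁`
contains the unit ball about `ξ - a`, so the expression is at least a constant times
`t · N² · N ^ (l - 1) / N ^ k`, that is, a constant times `N ^ (l - 1 - k)`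
(`time_integral_lower_bound`). The measures of `A` and `B` do not grow with `N`, and the exponent
`l - 1 - k` is positive, so letting `N → ∞` contradicts any uniform bound.
-/

open MeasureTheory

/-- The Japanese bracket `⟨ξ⟩ = √(1+|ξ|²)`. -/
noncomputable def jb {d : ℕ} (ξ : EuclideanSpace ℝ (Fin d)) : ℝ :=
  Real.sqrt (1 + ‖ξ‖ ^ 2)

lemma half_le_cos {x : ℝ} (hx : |x| ≤ 1) : 1 / 2 ≤ Real.cos x := by
  have h := Real.one_sub_sq_div_two_le_cos (x := x)
  have : x ^ 2 ≤ 1 := by rw [← sq_abs]; nlinarith [abs_nonneg x]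
  linarith

/-- A real power of a quantity comparable to `N` is comparable to that power of `N`,
whatever the sign of the exponent. -/
lemma rpow_comparable {N x : ℝ} (hN : 0 < N) (h1 : N / 3 ≤ x) (h2 : x ≤ 3 * N) (p : ℝ) :
    3 ^ (-|p|) * N ^ p ≤ x ^ p ∧ x ^ p ≤ 3 ^ |p| * N ^ p := by
  have hx : 0 < x := by linarith
  have key : |p * (Real.log x - Real.log N)| ≤ Real.log 3 * |p| := by
    rw [abs_mul, mul_comm]
    refine mul_le_mul_of_nonneg_right ?_ (abs_nonneg p)
    rw [abs_le]
    have e1 : Real.log (N / 3) ≤ Real.log x := Real.log_le_log (by positivity) h1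
    have e2 : Real.log x ≤ Real.log (3 * N) := Real.log_le_log hx h2
    rw [Real.log_div hN.ne' (by norm_num)] at e1
    rw [Real.log_mul (by norm_num) hN.ne'] at e2
    constructor <;> linarith
  rw [abs_le] at key
  have h3 : (0 : ℝ) < 3 := by norm_num
  rw [Real.rpow_def_of_pos h3, Real.rpow_def_of_pos h3, Real.rpow_def_of_pos hN,
    Real.rpow_def_of_pos hx, ← Real.exp_add, ← Real.exp_add]
  constructor <;> apply Real.exp_le_exp.2 <;> linarith [key.1, key.2]

lemma one_le_jb {d : ℕ} (ξ : EuclideanSpace ℝ (Fin d)) : 1 ≤ jb ξ := by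
  rw [jb, Real.one_le_sqrt]; nlinarith [sq_nonneg ‖ξ‖]

lemma norm_le_jb {d : ℕ} (ξ : EuclideanSpace ℝ (Fin d)) : ‖ξ‖ ≤ jb ξ :=
  Real.le_sqrt_of_sq_le (by linarith)

lemma jb_le {d : ℕ} (ξ : EuclideanSpace ℝ (Fin d)) : jb ξ ≤ 1 + ‖ξ‖ := by
  rw [jb, Real.sqrt_le_left (by positivity)]
  nlinarith [norm_nonneg ξ]

lemma continuous_jb {d : ℕ} : Continuous (jb : EuclideanSpace ℝ (Fin d) → ℝ) := by
  unfold jb; fun_prop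

lemma continuous_jb_rpow {d : ℕ} (p : ℝ) :
    Continuous (fun ξ : EuclideanSpace ℝ (Fin d) => jb ξ ^ p) :=
  continuous_jb.rpow_const fun ξ => Or.inl (by linarith [one_le_jb ξ])

/-- The low-frequency set. -/
def lowSet (d : ℕ) : Set (EuclideanSpace ℝ (Fin d)) := Metric.ball 0 2

/-- The symmetric high-frequency set, concentrated near `a` and `-a`. -/
def highSet {d : ℕ} (a : EuclideanSpace ℝ (Fin d)) : Set (EuclideanSpace ℝ (Fin d)) :=
  Metric.ball a 1 ∪ Metric.ball (-a) 1

lemma measurableSet_lowSet (d : ℕ) : MeasurableSet (lowSet d) := Metric.isOpen_ball.measurableSet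

lemma measurableSet_highSet {d : ℕ} (a : EuclideanSpace ℝ (Fin d)) :
    MeasurableSet (highSet a) :=
  Metric.isOpen_ball.measurableSet.union Metric.isOpen_ball.measurableSet

lemma lowSet_symm (d : ℕ) : lowSet d = -lowSet d := by
  ext x; simp [lowSet]

lemma highSet_symm {d : ℕ} (a : EuclideanSpace ℝ (Fin d)) : highSet a = -highSet a := by
  ext x
  have h1 : ‖-x - a‖ = ‖x + a‖ := by rw [← norm_neg]; congr 1; abel
  have h2 : ‖-x + a‖ = ‖x - a‖ := by rw [← norm_neg]; congr 1; abel
  simp only [highSet, Set.mem_neg, Set.mem_union, mem_ball_iff_norm, sub_neg_eq_add, h1, h2]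
  exact or_comm

lemma norm_of_mem_highSet {d : ℕ} {a x : EuclideanSpace ℝ (Fin d)} (hx : x ∈ highSet a) :
    ‖a‖ - 1 ≤ ‖x‖ ∧ ‖x‖ ≤ ‖a‖ + 1 := by
  have key : ∀ b : EuclideanSpace ℝ (Fin d), ‖b‖ = ‖a‖ → ‖x - b‖ < 1 →
      ‖a‖ - 1 ≤ ‖x‖ ∧ ‖x‖ ≤ ‖a‖ + 1 := by
    intro b hb h
    have := abs_le.1 ((abs_norm_sub_norm_le x b).trans h.le)
    rw [hb] at this
    constructor <;> linarith [this.1, this.2]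
  rcases hx with h | h
  · exact key a rfl (mem_ball_iff_norm.1 h)
  · exact key (-a) (norm_neg a) (mem_ball_iff_norm.1 h)

/-- The inner integrand at time `s` for the test sets. -/
noncomputable def testIntegrand {d : ℕ} (k l : ℝ) (a ξ : EuclideanSpace ℝ (Fin d)) (s : ℝ)
    (ξ₁ : EuclideanSpace ℝ (Fin d)) : ℝ :=
  jb ξ ^ (l - 1) / (jb ξ₁ ^ k * jb (ξ - ξ₁) ^ k) *
    Real.cos (s * (‖ξ₁‖ ^ 2 - ‖ξ - ξ₁‖ ^ 2)) *
    (lowSet d).indicator (fun _ => (1 : ℝ)) ξ₁ *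
    (highSet a).indicator (fun _ => (1 : ℝ)) (ξ - ξ₁)

/-- The continuous weight in `testIntegrand` without its oscillating factor, cut off to
`lowSet`; it dominates `testIntegrand` uniformly in `s`. -/
noncomputable def dominant {d : ℕ} (k l : ℝ) (ξ : EuclideanSpace ℝ (Fin d)) :
    EuclideanSpace ℝ (Fin d) → ℝ :=
  (lowSet d).indicator fun ξ₁ => jb ξ ^ (l - 1) / (jb ξ₁ ^ k * jb (ξ - ξ₁) ^ k)

lemma weight_pos {d : ℕ} (k l : ℝ) (ξ ξ₁ : EuclideanSpace ℝ (Fin d)) :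
    0 < jb ξ ^ (l - 1) / (jb ξ₁ ^ k * jb (ξ - ξ₁) ^ k) := by
  have h : ∀ (x : EuclideanSpace ℝ (Fin d)) (p : ℝ), 0 < jb x ^ p := fun x p =>
    Real.rpow_pos_of_pos (by linarith [one_le_jb x]) p
  have h1 := h ξ (l - 1)
  have h2 := h ξ₁ k
  have h3 := h (ξ - ξ₁) k
  positivity

lemma continuous_weight {d : ℕ} (k l : ℝ) (ξ : EuclideanSpace ℝ (Fin d)) :
    Continuous fun ξ₁ => jb ξ ^ (l - 1) / (jb ξ₁ ^ k * jb (ξ - ξ₁) ^ k) := by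
  refine continuous_const.div ((continuous_jb_rpow k).mul
    ((continuous_jb_rpow k).comp (continuous_const.sub continuous_id))) fun ξ₁ h => ?_
  have := weight_pos k l ξ ξ₁
  rw [show jb ξ₁ ^ k * jb (ξ - ξ₁) ^ k = 0 from h, div_zero] at this
  exact lt_irrefl _ this

lemma integrable_dominant {d : ℕ} (k l : ℝ) (ξ : EuclideanSpace ℝ (Fin d)) :
    Integrable (dominant k l ξ) := by
  rw [dominant, integrable_indicator_iff (measurableSet_lowSet d)]
  exact ((continuous_weight k l ξ).continuousOn.integrableOn_compact
    (isCompact_closedBall 0 2)).mono_set Metric.ball_subset_closedBall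

lemma measurable_testIntegrand {d : ℕ} (k l : ℝ) (a ξ : EuclideanSpace ℝ (Fin d)) (s : ℝ) :
    Measurable (testIntegrand k l a ξ s) := by
  unfold testIntegrand
  refine (((continuous_weight k l ξ).measurable.mul ?_).mul ?_).mul ?_
  · exact Continuous.measurable (by fun_prop)
  · exact measurable_const.indicator (measurableSet_lowSet d)
  · exact (measurable_const.indicator (measurableSet_highSet a)).comp
      (measurable_const.sub measurable_id)

lemma norm_testIntegrand_le {d : ℕ} (k l : ℝ) (a ξ : EuclideanSpace ℝ (Fin d)) (s : ℝ)
    (ξ₁ : EuclideanSpace ℝ (Fin d)) : ‖testIntegrand k l a ξ s ξ₁‖ ≤ dominant k l ξ ξ₁ := by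
  have hw := weight_pos k l ξ ξ₁
  unfold testIntegrand dominant
  set w := jb ξ ^ (l - 1) / (jb ξ₁ ^ k * jb (ξ - ξ₁) ^ k)
  have hc := Real.abs_cos_le_one (s * (‖ξ₁‖ ^ 2 - ‖ξ - ξ₁‖ ^ 2))
  by_cases h1 : ξ₁ ∈ lowSet d
  · by_cases h2 : ξ - ξ₁ ∈ highSet a
    · simp only [h1, h2, Set.indicator_of_mem, mul_one, Real.norm_eq_abs, abs_mul, abs_of_pos hw]
      nlinarith
    · simpa [h1, h2] using hw.le
  · simp [h1]

lemma integrable_testIntegrand {d : ℕ} (k l : ℝ) (a ξ : EuclideanSpace ℝ (Fin d)) (s : ℝ) :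
    Integrable (testIntegrand k l a ξ s) :=
  (integrable_dominant k l ξ).mono' (measurable_testIntegrand k l a ξ s).aestronglyMeasurable
    (.of_forall (norm_testIntegrand_le k l a ξ s))

lemma continuous_integral_testIntegrand {d : ℕ} (k l : ℝ) (a ξ : EuclideanSpace ℝ (Fin d)) :
    Continuous fun s => ∫ ξ₁, testIntegrand k l a ξ s ξ₁ :=
  continuous_of_dominated
    (fun s => (measurable_testIntegrand k l a ξ s).aestronglyMeasurable)
    (fun s => .of_forall (norm_testIntegrand_le k l a ξ s)) (integrable_dominant k l ξ)
    (.of_forall fun ξ₁ => by unfold testIntegrand; fun_prop)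

/-- The constant lost when every bracket is replaced by its order of magnitude. -/
noncomputable def bracketConst (k l : ℝ) : ℝ := 3 ^ (-|l - 1|) / (3 ^ |k| * 3 ^ |k|)

lemma bracketConst_pos (k l : ℝ) : 0 < bracketConst k l := by
  unfold bracketConst; positivity

lemma weight_lower_bound {d : ℕ} (k l : ℝ) {a ξ ξ₁ : EuclideanSpace ℝ (Fin d)} (ha : 4 ≤ ‖a‖)
    (hξ : ξ ∈ highSet a) (h1 : ξ₁ ∈ lowSet d) (h2 : ξ - ξ₁ ∈ highSet a) :
    bracketConst k l * ‖a‖ ^ (l - 1 - k) ≤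
      jb ξ ^ (l - 1) / (jb ξ₁ ^ k * jb (ξ - ξ₁) ^ k) := by
  have hN : 0 < ‖a‖ := by linarith
  have high : ∀ x ∈ highSet a, ‖a‖ / 3 ≤ jb x ∧ jb x ≤ 3 * ‖a‖ := fun x hx => by
    have := norm_of_mem_highSet hx
    constructor <;> linarith [norm_le_jb x, jb_le x, this.1, this.2]
  have hlow : ‖ξ₁‖ < 2 := by simpa [lowSet] using h1
  have e1 := (rpow_comparable hN (high ξ hξ).1 (high ξ hξ).2 (l - 1)).1
  have e2 := (rpow_comparable hN (high _ h2).1 (high _ h2).2 k).2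
  have e3 := (rpow_comparable one_pos (x := jb ξ₁) (by linarith [one_le_jb ξ₁])
    (by linarith [jb_le ξ₁]) k).2
  rw [Real.one_rpow, mul_one] at e3
  have p1 : 0 < jb ξ₁ ^ k := Real.rpow_pos_of_pos (by linarith [one_le_jb ξ₁]) k
  have p2 : 0 < jb (ξ - ξ₁) ^ k := Real.rpow_pos_of_pos (by linarith [one_le_jb (ξ - ξ₁)]) k
  calc bracketConst k l * ‖a‖ ^ (l - 1 - k)
      = (3 ^ (-|l - 1|) * ‖a‖ ^ (l - 1)) / (3 ^ |k| * (3 ^ |k| * ‖a‖ ^ k)) := by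
        rw [Real.rpow_sub hN, bracketConst]; field_simp
    _ ≤ _ := by
        apply div_le_div₀ ((by positivity : (0:ℝ) ≤ 3 ^ (-|l - 1|) * ‖a‖ ^ (l - 1)).trans e1) e1
          (by positivity)
        gcongr

lemma integral_testIntegrand_lower_bound {d : ℕ} (k l : ℝ) {a ξ : EuclideanSpace ℝ (Fin d)}
    (ha : 4 ≤ ‖a‖) (hξ : ξ ∈ Metric.ball a 1) {s : ℝ} (hs : 0 ≤ s) (hs' : s * (4 * ‖a‖ ^ 2) ≤ 1) :
    bracketConst k l * ‖a‖ ^ (l - 1 - k) / 2 *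
      volume.real (Metric.ball (0 : EuclideanSpace ℝ (Fin d)) 1) ≤
      ∫ ξ₁, testIntegrand k l a ξ s ξ₁ := by
  set c := bracketConst k l * ‖a‖ ^ (l - 1 - k) / 2 with hc
  have hball : volume.real (Metric.ball (ξ - a) 1) =
      volume.real (Metric.ball (0 : EuclideanSpace ℝ (Fin d)) 1) := by
    simp only [Measure.real, Measure.addHaar_ball_center volume (ξ - a) 1]
  have hint : ∫ ξ₁, (Metric.ball (ξ - a) 1).indicator (fun _ => c) ξ₁ =
      c * volume.real (Metric.ball (0 : EuclideanSpace ℝ (Fin d)) 1) := by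
    rw [integral_indicator Metric.isOpen_ball.measurableSet, setIntegral_const, hball,
      smul_eq_mul, mul_comm]
  rw [← hint]
  refine integral_mono ?_ (integrable_testIntegrand k l a ξ s) fun ξ₁ => ?_
  · exact (integrable_indicator_iff Metric.isOpen_ball.measurableSet).2
      (integrableOn_const measure_ball_lt_top.ne)
  have supp : ∀ ξ₁, ξ₁ ∈ lowSet d → ξ - ξ₁ ∈ highSet a → c ≤ testIntegrand k l a ξ s ξ₁ := by
    intro ξ₁ h1 h2
    have hw := weight_lower_bound k l ha (Or.inl hξ) h1 h2
    have hwp := weight_pos k l ξ ξ₁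
    have hlow : ‖ξ₁‖ < 2 := by simpa [lowSet] using h1
    have hhigh := norm_of_mem_highSet h2
    have hcos : 1 / 2 ≤ Real.cos (s * (‖ξ₁‖ ^ 2 - ‖ξ - ξ₁‖ ^ 2)) := by
      apply half_le_cos
      rw [abs_mul, abs_of_nonneg hs]
      refine (mul_le_mul_of_nonneg_left ?_ hs).trans hs'
      have b1 : ‖ξ₁‖ ^ 2 ≤ 4 := by nlinarith [norm_nonneg ξ₁]
      have b2 : ‖ξ - ξ₁‖ ^ 2 ≤ 4 * ‖a‖ ^ 2 := by nlinarith [norm_nonneg (ξ - ξ₁), hhigh.2]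
      rw [abs_le]
      constructor <;> nlinarith [sq_nonneg ‖ξ₁‖, sq_nonneg ‖ξ - ξ₁‖]
    simp only [testIntegrand, h1, h2, Set.indicator_of_mem, mul_one]
    rw [hc]
    nlinarith
  have hcpos : 0 ≤ c := by
    have := bracketConst_pos k l
    positivity
  by_cases hmem : ξ₁ ∈ Metric.ball (ξ - a) 1
  · simp only [hmem, Set.indicator_of_mem]
    have hd : ‖ξ - a - ξ₁‖ < 1 := by rw [norm_sub_rev]; exact mem_ball_iff_norm.1 hmem
    apply supp
    · have h : ‖ξ - a‖ < 1 := mem_ball_iff_norm.1 hξ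
      have := norm_sub_norm_le ξ₁ (ξ - a)
      rw [norm_sub_rev ξ₁] at this
      simp only [lowSet, mem_ball_zero_iff]
      linarith
    · left
      rw [mem_ball_iff_norm, sub_right_comm]
      exact hd
  · simp only [hmem, Set.indicator_of_notMem, not_false_eq_true]
    by_cases h : ξ₁ ∈ lowSet d ∧ ξ - ξ₁ ∈ highSet a
    · exact hcpos.trans (supp ξ₁ h.1 h.2)
    · rw [not_and_or] at h
      rcases h with h | h <;> simp [testIntegrand, h]

/-- At time `1 / (4 |a|²)` the factor `|ξ|²` exactly compensates the shortness of the time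
interval. -/
lemma time_integral_lower_bound {d : ℕ} (k l : ℝ) {a ξ : EuclideanSpace ℝ (Fin d)}
    (ha : 4 ≤ ‖a‖) (hξ : ξ ∈ Metric.ball a 1) :
    bracketConst k l * volume.real (Metric.ball (0 : EuclideanSpace ℝ (Fin d)) 1) / 64 *
      ‖a‖ ^ (l - 1 - k) ≤
      ∫ s in (0 : ℝ)..(1 / (4 * ‖a‖ ^ 2)),
        Real.cos ((1 / (4 * ‖a‖ ^ 2) - s) * ‖ξ‖) * ‖ξ‖ ^ 2 *
          ∫ ξ₁, testIntegrand k l a ξ s ξ₁ := by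
  set t := 1 / (4 * ‖a‖ ^ 2) with ht
  have hN : 0 < ‖a‖ := by linarith
  have ht0 : 0 < t := by positivity
  have htN : t * (4 * ‖a‖ ^ 2) = 1 := by rw [ht]; field_simp
  set m := bracketConst k l * ‖a‖ ^ (l - 1 - k) / 2 *
    volume.real (Metric.ball (0 : EuclideanSpace ℝ (Fin d)) 1) with hm
  have hm0 : 0 ≤ m := by
    have := bracketConst_pos k l
    positivity
  have hnorm := norm_of_mem_highSet (Or.inl hξ : ξ ∈ highSet a)
  have hconst : bracketConst k l *
      volume.real (Metric.ball (0 : EuclideanSpace ℝ (Fin d)) 1) / 64 * ‖a‖ ^ (l - 1 - k) =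
      ∫ _s in (0 : ℝ)..t, 1 / 2 * (‖a‖ / 2) ^ 2 * m := by
    rw [intervalIntegral.integral_const, smul_eq_mul, sub_zero]
    linear_combination (-(m / 32)) * htN + (1 / 32) * hm.symm
  rw [hconst]
  refine intervalIntegral.integral_mono_on ht0.le (by simp) ?_ fun s hs => ?_
  · apply Continuous.intervalIntegrable
    exact (by fun_prop : Continuous fun s : ℝ => Real.cos ((t - s) * ‖ξ‖) * ‖ξ‖ ^ 2).mul
      (continuous_integral_testIntegrand k l a ξ)
  · have hI := integral_testIntegrand_lower_bound k l ha hξ hs.1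
      (by rw [← htN]; exact mul_le_mul_of_nonneg_right hs.2 (by positivity))
    have hcos : 1 / 2 ≤ Real.cos ((t - s) * ‖ξ‖) := by
      apply half_le_cos
      have hts : 0 ≤ t - s := by linarith [hs.2]
      rw [abs_of_nonneg (by positivity), ← htN]
      apply mul_le_mul (by linarith [hs.1]) _ (norm_nonneg _) ht0.le
      nlinarith [hnorm.2]
    have hsq : (‖a‖ / 2) ^ 2 ≤ ‖ξ‖ ^ 2 := by
      apply pow_le_pow_left₀ (by positivity)
      linarith [hnorm.1]
    exact mul_le_mul (mul_le_mul hcos hsq (by positivity) (by linarith)) hI hm0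
      (mul_nonneg (by linarith) (by positivity))

/-- Case `l > k + 1` of the `C²` ill-posedness of the solution map of the
Zakharov system: the bilinear estimate coming from the second Gâteaux
derivative of the component `∂ₜn`, uniform in `t ∈ [0,T]` and tested on
symmetric sets, fails. -/
theorem solution_map_not_C2_high_l
    (d : ℕ) (hd : 1 ≤ d) (T : ℝ) (hT : 0 < T) (k l : ℝ) (hl : k + 1 < l) :
    ¬ ∃ C > 0, ∀ A B : Set (EuclideanSpace ℝ (Fin d)),
      MeasurableSet A → MeasurableSet B →
      Bornology.IsBounded A → Bornology.IsBounded B →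
      A = -A → B = -B →
      (⨆ t ∈ Set.Icc (0 : ℝ) T,
        eLpNorm
          (fun ξ => ∫ s in (0 : ℝ)..t,
            Real.cos ((t - s) * ‖ξ‖) * ‖ξ‖ ^ 2 * ∫ ξ₁,
              jb ξ ^ (l - 1) / (jb ξ₁ ^ k * jb (ξ - ξ₁) ^ k) *
                Real.cos (s * (‖ξ₁‖ ^ 2 - ‖ξ - ξ₁‖ ^ 2)) *
                A.indicator (fun _ => (1 : ℝ)) ξ₁ *
                B.indicator (fun _ => (1 : ℝ)) (ξ - ξ₁)) 2 volume) ≤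
      ENNReal.ofReal (C * (volume A).toReal ^ (1 / 2 : ℝ) *
        (volume B).toReal ^ (1 / 2 : ℝ)) := by
  rintro ⟨C, hC, H⟩
  set V := volume.real (Metric.ball (0 : EuclideanSpace ℝ (Fin d)) 1) with hV
  have hVtop : volume (Metric.ball (0 : EuclideanSpace ℝ (Fin d)) 1) ≠ ⊤ :=
    measure_ball_lt_top.ne
  have hVpos : 0 < V :=
    ENNReal.toReal_pos (Metric.measure_ball_pos volume _ one_pos).ne' hVtop
  set M := C * (volume (lowSet d)).toReal ^ (1 / 2 : ℝ) * (2 * V) ^ (1 / 2 : ℝ) with hM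
  set q := bracketConst k l * V / 64 with hq
  have hqpos : 0 < q := by
    have := bracketConst_pos k l
    positivity
  -- A frequency beyond which the lower bound `q N ^ (l - 1 - k) V ^ (1/2)` exceeds `M`.
  obtain ⟨N, hNbig, hN4, hNT⟩ : ∃ N : ℝ, M / (q * V ^ (1 / 2 : ℝ)) < N ^ (l - 1 - k) ∧ 4 ≤ N ∧
      1 / T ≤ N :=
    (((tendsto_rpow_atTop (by linarith : 0 < l - 1 - k)).eventually_gt_atTop _).and
      ((Filter.eventually_ge_atTop 4).and (Filter.eventually_ge_atTop (1 / T)))).exists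
  have hN0 : 0 < N := by linarith
  obtain ⟨a, ha⟩ : ∃ a : EuclideanSpace ℝ (Fin d), ‖a‖ = N :=
    ⟨EuclideanSpace.single ⟨0, hd⟩ N, by simp [abs_of_pos hN0]⟩
  have ha4 : 4 ≤ ‖a‖ := ha ▸ hN4
  set t := 1 / (4 * ‖a‖ ^ 2) with ht
  have htmem : t ∈ Set.Icc (0 : ℝ) T := by
    refine ⟨by positivity, ?_⟩
    rw [ht, ha, div_le_iff₀ (by positivity)]
    rw [div_le_iff₀ hT] at hNT
    nlinarith
  have hub := (le_iSup₂ (f := fun (t : ℝ) (_ : t ∈ Set.Icc (0 : ℝ) T) => eLpNorm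
    (fun ξ => ∫ s in (0 : ℝ)..t, Real.cos ((t - s) * ‖ξ‖) * ‖ξ‖ ^ 2 *
      ∫ ξ₁, testIntegrand k l a ξ s ξ₁) 2 volume) t htmem).trans
    (H (lowSet d) (highSet a) (measurableSet_lowSet d) (measurableSet_highSet a)
      Metric.isBounded_ball (Metric.isBounded_ball.union Metric.isBounded_ball)
      (lowSet_symm d) (highSet_symm a))
  have hlb : ENNReal.ofReal (q * N ^ (l - 1 - k) * V ^ (1 / 2 : ℝ)) ≤ eLpNorm
      (fun ξ => ∫ s in (0 : ℝ)..t, Real.cos ((t - s) * ‖ξ‖) * ‖ξ‖ ^ 2 *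
        ∫ ξ₁, testIntegrand k l a ξ s ξ₁) 2 volume := by
    have hc0 : 0 ≤ q * N ^ (l - 1 - k) := by positivity
    calc ENNReal.ofReal (q * N ^ (l - 1 - k) * V ^ (1 / 2 : ℝ))
        = eLpNorm ((Metric.ball a 1).indicator fun _ => q * N ^ (l - 1 - k)) 2 volume := by
          rw [eLpNorm_indicator_const Metric.isOpen_ball.measurableSet (by norm_num)
            (by norm_num), Measure.addHaar_ball_center, ENNReal.ofReal_mul hc0,
            Real.enorm_eq_ofReal hc0, ← ENNReal.ofReal_rpow_of_pos hVpos, hV, Measure.real,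
            ENNReal.ofReal_toReal hVtop]
          norm_num
      _ ≤ _ := by
          refine eLpNorm_mono fun ξ => ?_
          by_cases hξ : ξ ∈ Metric.ball a 1
          · rw [Set.indicator_of_mem hξ, Real.norm_of_nonneg hc0]
            refine le_trans ?_ (le_abs_self _)
            have := time_integral_lower_bound k l ha4 hξ
            rwa [ha, ← ha, ← ht, ha] at this
          · rw [Set.indicator_of_notMem hξ, norm_zero]
            exact norm_nonneg _
  have hBvol : (volume (highSet a)).toReal ≤ 2 * V := by
    have h : volume (highSet a) ≤ 2 * volume (Metric.ball (0 : EuclideanSpace ℝ (Fin d)) 1) := by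
      refine (measure_union_le _ _).trans ?_
      rw [Measure.addHaar_ball_center, Measure.addHaar_ball_center volume (-a), two_mul]
    have := ENNReal.toReal_mono (ENNReal.mul_ne_top (by norm_num) hVtop) h
    simpa [ENNReal.toReal_mul, hV, Measure.real] using this
  have hle := hlb.trans hub
  rw [ENNReal.ofReal_le_ofReal_iff (by positivity)] at hle
  have hle' : q * N ^ (l - 1 - k) * V ^ (1 / 2 : ℝ) ≤ M := by
    refine hle.trans ?_
    rw [hM]
    gcongr
  rw [div_lt_iff₀ (by positivity)] at hNbig
  linarith [mul_comm (N ^ (l - 1 - k)) (q * V ^ (1 / 2 : ℝ)),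
    mul_right_comm q (N ^ (l - 1 - k)) (V ^ (1 / 2 : ℝ))]
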